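/- arXiv:2212.07012 — 3 statements merged into one kernel-verified Lean document; each statement's English description precedes it below -/
import Mathlib

section
/- Legendre relation: for every u ∈ ℂ with u ∉ Γ, u + ω₁ ∉ Γ and u + ω₂ ∉ Γ, one has ω₁·(ζ(u + ω₂) − ζ(u)) − ω₂·(ζ(u + ω₁) − ζ(u)) = 2πi. -/
/-!
The Legendre relation by Eisenstein summation. In the combination
`ω₁ (ζ(u + ω₂) - ζ(u)) - ω₂ (ζ(u + ω₁) - ζ(u))` the convergence terms `1/γ` and `u/γ²` cancel, and
what remains is an absolutely convergent series of differences of the simple fractions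
`1/(u - γ)`. It may therefore be summed row by row: over `γ = kω₁ + nω₂` with `k` fixed, the
symmetric sum of `1/(u - γ)` is `(π/ω₂) cot (π(u - kω₁)/ω₂)`. This is `ω₂`-periodic in `u`, so the
first difference contributes nothing, while a shift by `ω₁` shifts `k`, so the second one
telescopes over the rows. The value `2πi` is the jump of the cotangent from `-i` at `i∞` to `i`
at `-i∞`.
-/

/-- The rank-2 lattice generated by `ω₁` and `ω₂`. -/
def lattice (ω₁ ω₂ : ℂ) : Set ℂ := {z | ∃ k n : ℤ, z = (k : ℂ) * ω₁ + (n : ℂ) * ω₂}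

/-- The Weierstrass zeta-function for the lattice generated by `ω₁` and `ω₂`. -/
noncomputable def wzeta (ω₁ ω₂ : ℂ) (u : ℂ) : ℂ :=
  1 / u + ∑' kn : ℤ × ℤ,
    if kn = (0, 0) then 0
    else 1 / (u - ((kn.1 : ℂ) * ω₁ + (kn.2 : ℂ) * ω₂))
      + 1 / ((kn.1 : ℂ) * ω₁ + (kn.2 : ℂ) * ω₂)
      + u / ((kn.1 : ℂ) * ω₁ + (kn.2 : ℂ) * ω₂) ^ 2

open Filter Topology Complex SummationFilter
open scoped Real

section ConditionalSums

lemma hasSum_unique_of_rows {α β γ : Type*} [AddCommGroup α] [UniformSpace α]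
    [IsUniformAddGroup α] [CompleteSpace α] [T2Space α]
    {L₁ : SummationFilter β} [L₁.NeBot] [L₁.LeAtTop]
    {L₂ : SummationFilter γ} [L₂.NeBot] [L₂.LeAtTop]
    {f : β × γ → α} {g : β → α} {a b : α} (hf : HasSum f a)
    (hrow : ∀ i, HasSum (fun j ↦ f (i, j)) (g i) L₂) (hg : HasSum g b L₁) : a = b := by
  have hrow_uncond (i : β) : HasSum (fun j ↦ f (i, j)) (g i) := by
    have hs := (hf.summable.prod_factor i).hasSum
    rwa [HasSum.unique (hs.mono_left L₂.le_atTop) (hrow i)] at hs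
  exact HasSum.unique ((hf.prod_fiberwise hrow_uncond).mono_left L₁.le_atTop) hg

lemma hasSum_symmetricIco_telescope {α : Type*} [AddCommGroup α] [TopologicalSpace α]
    [IsTopologicalAddGroup α] {f : ℤ → α} {a b : α} (htop : Tendsto f atTop (𝓝 a))
    (hbot : Tendsto f atBot (𝓝 b)) :
    HasSum (fun k ↦ f (k + 1) - f k) (a - b) (symmetricIco ℤ) := by
  have hsum (N : ℕ) : ∑ k ∈ Finset.Ico (-(N : ℤ)) N, (f (k + 1) - f k) = f N - f (-N) := by
    simpa only [← Finset.sum_neg_distrib, neg_sub] using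
      congrArg Neg.neg (Finset.sum_Ico_int_sub N f)
  simp only [hasSum_symmetricIco_int_iff, hsum]
  exact (htop.comp tendsto_natCast_atTop_atTop).sub
    (hbot.comp (tendsto_neg_atTop_atBot.comp tendsto_natCast_atTop_atTop))

end ConditionalSums

section Cotangent

lemma hasSum_symmetricIcc_one_div_sub_intCast {x : ℂ} (hx : x ∈ integerComplement) :
    HasSum (fun n : ℤ ↦ 1 / (x - n)) (π * cot (π * x)) (symmetricIcc ℤ) := by
  have hpartial (N : ℕ) : ∑ n ∈ Finset.Icc (-(N : ℤ)) N, 1 / (x - n)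
      = ∑ j ∈ Finset.range N, cotTerm x j + 1 / x := by
    induction N with
    | zero => simp
    | succ N ih =>
      rw [Nat.cast_succ, Finset.sum_Icc_succ_eq_add_endpoints, ih, Finset.sum_range_succ, cotTerm]
      push_cast
      ring
  simp only [hasSum_symmetricIcc_iff, hpartial]
  simpa only [sub_add_cancel] using (tendsto_logDeriv_euler_cot_sub hx).add_const (1 / x)

lemma cot_add_pi (z : ℂ) : cot (z + π) = cot z := by
  rw [cot, cot, Complex.cos_add_pi, Complex.sin_add_pi, neg_div_neg_eq]

lemma cot_neg (z : ℂ) : cot (-z) = -cot z := by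
  rw [cot, cot, Complex.cos_neg, Complex.sin_neg, div_neg]

lemma tendsto_cot_comap_im_atTop : Tendsto cot (comap im atTop) (𝓝 (-I)) := by
  have hexp : Tendsto (fun z ↦ Complex.exp (2 * I * z)) (comap im atTop) (𝓝 0) := by
    have hre (z : ℂ) : (2 * I * z).re = -2 * z.im := by simp
    simp only [tendsto_exp_nhds_zero_iff, hre]
    exact tendsto_comap.const_mul_atTop_of_neg (by norm_num)
  have hratio := (hexp.add_const 1).div ((hexp.const_sub 1).const_mul I) (by simp)
  simpa [Pi.div_def, ← cot_eq_exp_ratio] using hratio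

lemma tendsto_cot_comap_im_atBot : Tendsto cot (comap im atBot) (𝓝 I) := by
  have hneg : Tendsto (fun z : ℂ ↦ -z) (comap im atBot) (comap im atTop) :=
    tendsto_comap_iff.2 (tendsto_neg_atBot_atTop.comp tendsto_comap)
  simpa [Function.comp_def, cot_neg] using (tendsto_cot_comap_im_atTop.comp hneg).neg

end Cotangent

section EisensteinRow

/-- The Eisenstein sum of `1 / (u - γ)` over the row `γ = k * ω₁ + n * ω₂`, `n ∈ ℤ`, of the lattice,
in closed form; see `hasSum_eisensteinRow`. -/
noncomputable def eisensteinRow (ω₁ ω₂ u : ℂ) (k : ℤ) : ℂ :=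
  π / ω₂ * cot (π * ((u - k * ω₁) / ω₂))

variable {ω₁ ω₂ : ℂ}

lemma hasSum_eisensteinRow (hω₂ : ω₂ ≠ 0) {u : ℂ} (hu : u ∉ lattice ω₁ ω₂) (k : ℤ) :
    HasSum (fun n : ℤ ↦ 1 / (u - (k * ω₁ + n * ω₂))) (eisensteinRow ω₁ ω₂ u k)
      (symmetricIcc ℤ) := by
  have hx : (u - k * ω₁) / ω₂ ∈ integerComplement := by
    rintro ⟨n, hn⟩
    exact hu ⟨k, n, by linear_combination -(eq_div_iff hω₂).1 hn⟩
  convert! (hasSum_symmetricIcc_one_div_sub_intCast hx).mul_left (1 / ω₂) using 2 with n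
  · rw [one_div_mul_one_div, mul_sub, mul_div_cancel₀ _ hω₂]
    ring
  · rw [eisensteinRow]
    ring

lemma eisensteinRow_add_left (u : ℂ) (k : ℤ) :
    eisensteinRow ω₁ ω₂ (u + ω₁) (k + 1) = eisensteinRow ω₁ ω₂ u k := by
  simp only [eisensteinRow]
  push_cast
  ring_nf

lemma eisensteinRow_add_right (hω₂ : ω₂ ≠ 0) (u : ℂ) (k : ℤ) :
    eisensteinRow ω₁ ω₂ (u + ω₂) k = eisensteinRow ω₁ ω₂ u k := by
  have harg : π * ((u + ω₂ - k * ω₁) / ω₂) = π * ((u - k * ω₁) / ω₂) + π := by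
    field_simp
    ring
  rw [eisensteinRow, harg, cot_add_pi, eisensteinRow]

lemma im_pi_mul_sub_mul_div (u : ℂ) (k : ℤ) :
    (π * ((u - k * ω₁) / ω₂)).im = π * (u / ω₂).im + -(π * (ω₁ / ω₂).im) * k := by
  rw [im_ofReal_mul, sub_div, mul_div_assoc, sub_im, ← ofReal_intCast, im_ofReal_mul]
  ring

lemma tendsto_eisensteinRow_atTop (hτ : 0 < (ω₁ / ω₂).im) (u : ℂ) :
    Tendsto (eisensteinRow ω₁ ω₂ u) atTop (𝓝 (π / ω₂ * I)) := by
  refine (tendsto_cot_comap_im_atBot.comp (tendsto_comap_iff.2 ?_)).const_mul _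
  simp only [Function.comp_def, im_pi_mul_sub_mul_div]
  exact tendsto_atBot_add_const_left _ _
    (tendsto_intCast_atTop_atTop.const_mul_atTop_of_neg (by simpa using mul_pos Real.pi_pos hτ))

lemma tendsto_eisensteinRow_atBot (hτ : 0 < (ω₁ / ω₂).im) (u : ℂ) :
    Tendsto (eisensteinRow ω₁ ω₂ u) atBot (𝓝 (π / ω₂ * -I)) := by
  refine (tendsto_cot_comap_im_atTop.comp (tendsto_comap_iff.2 ?_)).const_mul _
  simp only [Function.comp_def, im_pi_mul_sub_mul_div]
  exact tendsto_atTop_add_const_left _ _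
    ((tendsto_intCast_atBot_iff.2 tendsto_id).const_mul_atBot_of_neg
      (by simpa using mul_pos Real.pi_pos hτ))

end EisensteinRow

section ZetaSeries

variable {ω₁ ω₂ : ℂ}

lemma linearIndependent_pair_of_im_div_ne_zero (h : (ω₁ / ω₂).im ≠ 0) :
    LinearIndependent ℝ ![ω₁, ω₂] := by
  have hω₂ : ω₂ ≠ 0 := by
    rintro rfl
    simp at h
  rw [LinearIndependent.pair_symm_iff, LinearIndependent.pair_iff' hω₂]
  rintro t rfl
  simp [hω₂] at h

/-- The lattice point with integer coordinates `kn` with respect to the periods `ω₁` and `ω₂`. -/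
def latticePoint (ω₁ ω₂ : ℂ) (kn : ℤ × ℤ) : ℂ := kn.1 * ω₁ + kn.2 * ω₂

lemma summable_norm_latticePoint_sub_inv_pow_three (h : LinearIndependent ℝ ![ω₁, ω₂]) (u : ℂ) :
    Summable fun kn ↦ ‖latticePoint ω₁ ω₂ kn - u‖⁻¹ ^ 3 := by
  let L : PeriodPair := ⟨ω₁, ω₂, h⟩
  have hL := ZLattice.summable_norm_sub_inv_pow L.lattice 3 (by simp) u
  rw [← L.latticeEquivProd.symm.toEquiv.summable_iff] at hL
  exact hL.congr fun kn ↦ by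
    simp only [Function.comp_apply, LinearEquiv.coe_toEquiv, L.latticeEquiv_symm_apply kn,
      latticePoint, L]

/-- The summand of the Weierstrass zeta-function at the lattice point `γ`. Since `x / 0 = 0`, it is
the principal part `1 / u` at `γ = 0`. -/
noncomputable def zetaTerm (u γ : ℂ) : ℂ := 1 / (u - γ) + 1 / γ + u / γ ^ 2

lemma sq_mul_le_pow_three_add_pow_three {R : Type*} [CommSemiring R] [LinearOrder R]
    [IsStrictOrderedRing R] {a b : R} (ha : 0 ≤ a) (hb : 0 ≤ b) :
    a ^ 2 * b ≤ a ^ 3 + b ^ 3 := by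
  rcases le_total a b with hab | hba
  · calc a ^ 2 * b ≤ b ^ 2 * b := by gcongr
      _ = b ^ 3 := by ring
      _ ≤ a ^ 3 + b ^ 3 := le_add_of_nonneg_left (by positivity)
  · calc a ^ 2 * b ≤ a ^ 2 * a := by gcongr
      _ = a ^ 3 := by ring
      _ ≤ a ^ 3 + b ^ 3 := le_add_of_nonneg_right (by positivity)

lemma norm_zetaTerm_le {u γ : ℂ} (h : u ≠ γ) :
    ‖zetaTerm u γ‖ ≤ ‖u‖ ^ 2 * (‖γ‖⁻¹ ^ 3 + ‖γ - u‖⁻¹ ^ 3) := by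
  rcases eq_or_ne γ 0 with rfl | hγ
  · have hu : ‖u‖ ≠ 0 := norm_ne_zero_iff.2 h
    have hterm : zetaTerm u 0 = u⁻¹ := by simp [zetaTerm]
    refine le_of_eq ?_
    rw [hterm, norm_inv, norm_zero, zero_sub, norm_neg, inv_zero, zero_pow three_ne_zero, zero_add]
    field_simp
  · have hu : u - γ ≠ 0 := sub_ne_zero.2 h
    have hterm : zetaTerm u γ = u ^ 2 * (γ⁻¹ ^ 2 * (u - γ)⁻¹) := by
      rw [zetaTerm]
      field_simp
      ring
    rw [hterm, norm_mul, norm_mul, norm_pow, norm_pow, norm_inv, norm_inv, norm_sub_rev u]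
    gcongr
    exact sq_mul_le_pow_three_add_pow_three (by positivity) (by positivity)

lemma hasSum_zetaTerm (h : LinearIndependent ℝ ![ω₁, ω₂]) {u : ℂ} (hu : u ∉ lattice ω₁ ω₂) :
    HasSum (fun kn ↦ zetaTerm u (latticePoint ω₁ ω₂ kn)) (wzeta ω₁ ω₂ u) := by
  have hsummable : Summable fun kn ↦ zetaTerm u (latticePoint ω₁ ω₂ kn) := by
    have h₀ := summable_norm_latticePoint_sub_inv_pow_three h 0
    simp only [sub_zero] at h₀
    refine .of_norm_bounded ((h₀.add
      (summable_norm_latticePoint_sub_inv_pow_three h u)).mul_left (‖u‖ ^ 2)) fun kn ↦ ?_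
    exact norm_zetaTerm_le fun huγ ↦ hu ⟨kn.1, kn.2, huγ⟩
  convert! hsummable.hasSum using 1
  rw [hsummable.tsum_eq_add_tsum_ite (0, 0)]
  simp [wzeta, zetaTerm, latticePoint]

end ZetaSeries

section LegendreTerm

/-- The contribution of the lattice point `γ` to the left-hand side of the Legendre relation. -/
noncomputable def legendreTerm (ω₁ ω₂ u γ : ℂ) : ℂ :=
  ω₁ * (1 / (u + ω₂ - γ) - 1 / (u - γ)) - ω₂ * (1 / (u + ω₁ - γ) - 1 / (u - γ))

lemma mul_zetaTerm_sub_sub_mul_zetaTerm_sub (ω₁ ω₂ u γ : ℂ) :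
    ω₁ * (zetaTerm (u + ω₂) γ - zetaTerm u γ) - ω₂ * (zetaTerm (u + ω₁) γ - zetaTerm u γ)
      = legendreTerm ω₁ ω₂ u γ := by
  simp only [zetaTerm, legendreTerm]
  ring

variable {ω₁ ω₂ u : ℂ}

lemma hasSum_legendreTerm (h : LinearIndependent ℝ ![ω₁, ω₂]) (hu : u ∉ lattice ω₁ ω₂)
    (hu₁ : u + ω₁ ∉ lattice ω₁ ω₂) (hu₂ : u + ω₂ ∉ lattice ω₁ ω₂) :
    HasSum (fun kn ↦ legendreTerm ω₁ ω₂ u (latticePoint ω₁ ω₂ kn))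
      (ω₁ * (wzeta ω₁ ω₂ (u + ω₂) - wzeta ω₁ ω₂ u)
        - ω₂ * (wzeta ω₁ ω₂ (u + ω₁) - wzeta ω₁ ω₂ u)) := by
  simp only [← mul_zetaTerm_sub_sub_mul_zetaTerm_sub]
  have hζ := hasSum_zetaTerm h hu
  exact (((hasSum_zetaTerm h hu₂).sub hζ).mul_left ω₁).sub
    (((hasSum_zetaTerm h hu₁).sub hζ).mul_left ω₂)

lemma hasSum_legendreTerm_row (hω₂ : ω₂ ≠ 0) (hu : u ∉ lattice ω₁ ω₂)
    (hu₁ : u + ω₁ ∉ lattice ω₁ ω₂) (hu₂ : u + ω₂ ∉ lattice ω₁ ω₂) (k : ℤ) :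
    HasSum (fun n : ℤ ↦ legendreTerm ω₁ ω₂ u (latticePoint ω₁ ω₂ (k, n)))
      (ω₂ * (eisensteinRow ω₁ ω₂ u k - eisensteinRow ω₁ ω₂ (u + ω₁) k)) (symmetricIcc ℤ) := by
  have hrow := hasSum_eisensteinRow hω₂ hu k
  convert! (((hasSum_eisensteinRow hω₂ hu₂ k).sub hrow).mul_left ω₁).sub
    (((hasSum_eisensteinRow hω₂ hu₁ k).sub hrow).mul_left ω₂) using 1
  rw [eisensteinRow_add_right hω₂]
  ring

lemma hasSum_mul_eisensteinRow_sub (hω₂ : ω₂ ≠ 0) (hτ : 0 < (ω₁ / ω₂).im) (u : ℂ) :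
    HasSum (fun k ↦ ω₂ * (eisensteinRow ω₁ ω₂ u k - eisensteinRow ω₁ ω₂ (u + ω₁) k))
      (2 * π * I) (symmetricIco ℤ) := by
  have hsum := (hasSum_symmetricIco_telescope (tendsto_eisensteinRow_atTop hτ (u + ω₁))
    (tendsto_eisensteinRow_atBot hτ (u + ω₁))).mul_left ω₂
  simp only [eisensteinRow_add_left] at hsum
  convert! hsum using 1
  field_simp
  ring

end LegendreTerm

/-- The Legendre relation `ω₁ η₂ - ω₂ η₁ = 2πi`. -/
theorem legendre_relation (ω₁ ω₂ : ℂ) (hω₁ : ω₁ ≠ 0) (hω₂ : ω₂ ≠ 0)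
    (hτ : 0 < (ω₁ / ω₂).im) (u : ℂ)
    (hu : u ∉ lattice ω₁ ω₂) (hu₁ : u + ω₁ ∉ lattice ω₁ ω₂)
    (hu₂ : u + ω₂ ∉ lattice ω₁ ω₂) :
    ω₁ * (wzeta ω₁ ω₂ (u + ω₂) - wzeta ω₁ ω₂ u)
      - ω₂ * (wzeta ω₁ ω₂ (u + ω₁) - wzeta ω₁ ω₂ u)
      = 2 * Real.pi * Complex.I := by
  have hindep := linearIndependent_pair_of_im_div_ne_zero hτ.ne'
  exact hasSum_unique_of_rows (hasSum_legendreTerm hindep hu hu₁ hu₂)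
    (hasSum_legendreTerm_row hω₂ hu hu₁ hu₂) (hasSum_mul_eisensteinRow_sub hω₂ hτ u)
end

section
/- For all integers a, b, c, d with ad − bc = 1 and all τ ∈ ℍ, one has E2((aτ + b)/(cτ + d)) = (cτ + d)² E2(τ) − (6i/π) · c · (cτ + d). -/
/-!
Mathlib's `EisensteinSeries.E2` is the normalised, conditionally convergent lattice sum of weight
two; its `q`-expansion is the divisor-sum series `1 - 24 ∑ σ₁(n) qⁿ`. Before normalisation, the
lattice sum fails to be modular by the cocycle `2πi c / (cz + d)`. Dividing by its constant term
`2 ζ(2) = π² / 3` turns this into `6i c / (π (cz + d))`.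
-/

/-- `q = exp(2πiτ)`. -/
noncomputable def qexp (τ : ℂ) : ℂ := Complex.exp (2 * Real.pi * Complex.I * τ)

/-- Divisor power sum `σ_k(n) = ∑_{d | n} d^k`, as a complex number. -/
noncomputable def sigmaC (k n : ℕ) : ℂ := ∑ d ∈ Nat.divisors n, (d : ℂ) ^ k

/-- Eisenstein series `E₂`. -/
noncomputable def E2 (τ : ℂ) : ℂ := 1 - 24 * ∑' n : ℕ, sigmaC 1 (n + 1) * qexp τ ^ (n + 1)

/-- Eisenstein series `E₄`. -/
noncomputable def E4 (τ : ℂ) : ℂ := 1 + 240 * ∑' n : ℕ, sigmaC 3 (n + 1) * qexp τ ^ (n + 1)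

/-- Eisenstein series `E₆`. -/
noncomputable def E6 (τ : ℂ) : ℂ := 1 - 504 * ∑' n : ℕ, sigmaC 5 (n + 1) * qexp τ ^ (n + 1)

/-- The discriminant form `Δ = (E₄³ - E₆²)/1728`. -/
noncomputable def Δfun (τ : ℂ) : ℂ := (E4 τ ^ 3 - E6 τ ^ 2) / 1728

/-- The ratio of quasi-periods `p(τ) = τ - 6i/(π E₂(τ))`. -/
noncomputable def pfun (τ : ℂ) : ℂ := τ - 6 * Complex.I / (Real.pi * E2 τ)

open UpperHalfPlane hiding I
open Complex MatrixGroups ModularForm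

lemma SL_slash_apply_eq_iff (f : ℍ → ℂ) (k : ℤ) (γ : SL(2, ℤ)) (z : ℍ) (w : ℂ) :
    (f ∣[k] γ) z = w ↔ f (γ • z) = denom γ z ^ k * w := by
  rw [SL_slash_apply, zpow_neg, mul_comm,
    inv_mul_eq_iff_eq_mul₀ (zpow_ne_zero k (denom_ne_zero γ z))]

lemma one_div_two_mul_riemannZeta_two_mul_D2 (γ : SL(2, ℤ)) (z : ℍ) :
    1 / (2 * riemannZeta 2) * EisensteinSeries.D2 γ z
      = 6 * I / Real.pi * γ 1 0 / denom γ z := by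
  rw [EisensteinSeries.D2, riemannZeta_two]
  field

lemma eisensteinSeries_E2_smul (γ : SL(2, ℤ)) (z : ℍ) :
    EisensteinSeries.E2 (γ • z) = denom γ z ^ 2 * EisensteinSeries.E2 z
      - 6 * I / Real.pi * γ 1 0 * denom γ z := by
  have slash : (EisensteinSeries.E2 ∣[(2 : ℤ)] γ) z
      = EisensteinSeries.E2 z - 6 * I / Real.pi * γ 1 0 / denom γ z := by
    rw [EisensteinSeries.E2_slash_action, Pi.sub_apply, Pi.smul_apply, smul_eq_mul,
      one_div_two_mul_riemannZeta_two_mul_D2]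
  rw [(SL_slash_apply_eq_iff _ _ _ _ _).1 slash, zpow_ofNat]
  field

lemma sigmaC_eq_sigma (k n : ℕ) : sigmaC k n = ArithmeticFunction.sigma k n := by
  simp [sigmaC, ArithmeticFunction.sigma_apply]

lemma E2_coe_eq_eisensteinSeries_E2 (z : ℍ) : E2 z = EisensteinSeries.E2 z := by
  rw [EisensteinSeries.E2_eq_tsum_cexp, tsum_pnat_eq_tsum_succ
    (f := fun n : ℕ ↦ (ArithmeticFunction.sigma 1 n : ℂ) * cexp (2 * Real.pi * I * z) ^ n)]
  simp only [E2, qexp, sigmaC_eq_sigma]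

/-- The quasi-modular transformation behavior of `E₂` under the modular group. -/
theorem E2_modular_transformation (a b c d : ℤ) (h : a * d - b * c = 1)
    (τ : ℂ) (hτ : 0 < τ.im) :
    E2 (((a : ℂ) * τ + b) / ((c : ℂ) * τ + d))
      = ((c : ℂ) * τ + d) ^ 2 * E2 τ
        - 6 * Complex.I / Real.pi * c * ((c : ℂ) * τ + d) := by
  let γ : SL(2, ℤ) := ⟨!![a, b; c, d], by rwa [Matrix.det_fin_two_of]⟩
  let z : ℍ := ⟨τ, hτ⟩
  have hdenom : denom γ z = c * τ + d := by
    rw [ModularGroup.denom_apply]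
    simp [γ, z]
  have hsmul : ((γ • z : ℍ) : ℂ) = (a * τ + b) / (c * τ + d) := by
    rw [coe_specialLinearGroup_apply]
    simp [γ, z]
  calc E2 ((a * τ + b) / (c * τ + d))
      = EisensteinSeries.E2 (γ • z) := by rw [← hsmul, E2_coe_eq_eisensteinSeries_E2]
    _ = denom γ z ^ 2 * EisensteinSeries.E2 z - 6 * I / Real.pi * γ 1 0 * denom γ z :=
      eisensteinSeries_E2_smul γ z
    _ = (c * τ + d) ^ 2 * E2 τ - 6 * I / Real.pi * c * (c * τ + d) := by
      rw [hdenom, ← E2_coe_eq_eisensteinSeries_E2]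
      rfl
end

section
/- Ramanujan identity for E4: for all τ ∈ ℍ, (1/(2πi)) · E4'(τ) = (E2(τ)·E4(τ) − E6(τ))/3, where E4' denotes the complex derivative of E4. -/
/-!
The Serre derivative `∂ₖ f = D f - (k / 12) E₂ f`, where `D = (2πi)⁻¹ d/dτ`, sends level-one
modular forms of weight `k` to level-one modular forms of weight `k + 2`. Writing `f = F(q)`, one
has `D f = q · dF/dq → 0` and `E₂ → 1` at `i∞`, so `∂ₖ` multiplies the constant term by `-k / 12`.
There are no nonzero level-one cusp forms of weight less than `12`, so in those weights a form is
determined by its constant term. Hence `∂₄ E₄ = -E₆ / 3`.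
-/

open UpperHalfPlane ModularForm MatrixGroups Filter Derivative
open Function (Periodic)
open scoped Topology Manifold ArithmeticFunction.sigma

local notation "𝕢" => Periodic.qParam

section QExpansion

variable {h : ℝ} {f : ℍ → ℂ} {c : ℕ → ℂ}

-- `(f - c 0) / q` is again given by a convergent `q`-expansion, hence is bounded.
lemma isBigO_qParam_of_hasSum_qExpansion (hh : 0 < h)
    (hf : ∀ τ : ℍ, HasSum (fun m ↦ c m • 𝕢 h τ ^ m) (f τ)) :
    (fun τ ↦ f τ - c 0) =O[atImInfty] fun τ : ℍ ↦ 𝕢 h τ := by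
  have hq (τ : ℍ) : 𝕢 h τ ≠ 0 := Periodic.qParam_ne_zero _
  have hbdd : IsBoundedAtImInfty fun τ ↦ (f τ - c 0) / 𝕢 h τ := by
    refine isBoundedAtImInfty_of_hasSum_qExpansion (c := fun m ↦ c (m + 1)) hh fun τ ↦ ?_
    simpa [pow_succ, ← mul_assoc, mul_div_cancel_right₀ _ (hq τ)] using
      ((hasSum_nat_add_iff' 1).mpr (hf τ)).div_const (𝕢 h τ)
  exact (Asymptotics.isBigO_iff_div_isBoundedUnder (.of_forall fun τ h0 ↦ absurd h0 (hq τ))).mpr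
    ((Asymptotics.isBigO_one_iff ℝ).mp hbdd)

lemma tendsto_atImInfty_of_hasSum_qExpansion (hh : 0 < h)
    (hf : ∀ τ : ℍ, HasSum (fun m ↦ c m • 𝕢 h τ ^ m) (f τ)) :
    Tendsto f atImInfty (𝓝 (c 0)) :=
  tendsto_sub_nhds_zero_iff.mp <|
    (isBigO_qParam_of_hasSum_qExpansion hh hf).trans_tendsto (qParam_tendsto_atImInfty hh)

end QExpansion

section NormalizedDeriv

lemma hasDerivAt_qParam (h : ℝ) (z : ℂ) :
    HasDerivAt (𝕢 h) (2 * Real.pi * Complex.I / h * 𝕢 h z) z := by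
  have hlin : HasDerivAt (fun w : ℂ ↦ 2 * Real.pi * Complex.I * w / h)
      (2 * Real.pi * Complex.I / h) z := by
    simpa using ((hasDerivAt_id z).const_mul (2 * Real.pi * Complex.I)).div_const (h : ℂ)
  exact hlin.cexp.congr_deriv (mul_comm _ _)

lemma hasDerivAt_comp_ofComplex {f : ℍ → ℂ} {τ : ℍ} (hf : MDiffAt f τ) :
    HasDerivAt (f ∘ ofComplex) (2 * Real.pi * Complex.I * D f τ) τ := by
  rw [normalizedDerivOfComplex, mul_inv_cancel_left₀ Complex.two_pi_I_ne_zero]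
  exact (UpperHalfPlane.mdifferentiableAt_iff.mp hf).hasDerivAt

variable {h : ℝ} {f : ℍ → ℂ}

lemma normalizedDerivOfComplex_eq_qParam_mul_deriv (hh : 0 < h)
    (hper : Periodic (f ∘ ofComplex) h) (hhol : MDiff f) (hbdd : IsBoundedAtImInfty f) (τ : ℍ) :
    D f τ = 𝕢 h τ / h * deriv (cuspFunction h f) (𝕢 h τ) := by
  have hfactor : f ∘ ofComplex = cuspFunction h f ∘ 𝕢 h :=
    funext fun z ↦ (Periodic.eq_cuspFunction hh.ne' hper z).symm
  have hF : DifferentiableAt ℂ (cuspFunction h f) (𝕢 h τ) :=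
    differentiableAt_cuspFunction hh hper hhol hbdd (Periodic.norm_qParam_lt_one hh τ.im_pos)
  rw [normalizedDerivOfComplex, hfactor, (hF.hasDerivAt.comp _ (hasDerivAt_qParam h τ)).deriv]
  field

lemma isZeroAtImInfty_normalizedDerivOfComplex (hh : 0 < h)
    (hper : Periodic (f ∘ ofComplex) h) (hhol : MDiff f) (hbdd : IsBoundedAtImInfty f) :
    IsZeroAtImInfty (D f) := by
  have hq := qParam_tendsto_atImInfty hh
  have hF : ContinuousAt (deriv (cuspFunction h f)) 0 :=
    (analyticAt_cuspFunction_zero hh hper hhol hbdd).deriv.continuousAt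
  have hlim := (hq.div_const (h : ℂ)).mul (hF.tendsto.comp hq)
  rw [zero_div, zero_mul] at hlim
  exact hlim.congr fun τ ↦ (normalizedDerivOfComplex_eq_qParam_mul_deriv hh hper hhol hbdd τ).symm

end NormalizedDeriv

section LevelOne

variable {k : ℤ}

lemma tendsto_atImInfty_qExpansion_coeff_zero (f : ModularForm 𝒮ℒ k) :
    Tendsto f atImInfty (𝓝 ((qExpansion 1 f).coeff 0)) :=
  tendsto_atImInfty_of_hasSum_qExpansion one_pos
    (ModularForm.hasSum_qExpansion f one_pos one_mem_strictPeriods_SL)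

lemma qExpansion_coeff_zero_eq_of_tendsto {f : ModularForm 𝒮ℒ k} {a : ℂ}
    (hf : Tendsto f atImInfty (𝓝 a)) : (qExpansion 1 f).coeff 0 = a :=
  tendsto_nhds_unique (tendsto_atImInfty_qExpansion_coeff_zero f) hf

lemma eq_of_qExpansion_coeff_zero_eq_of_weight_lt_twelve (hk : k < 12) {f g : ModularForm 𝒮ℒ k}
    (hfg : (qExpansion 1 f).coeff 0 = (qExpansion 1 g).coeff 0) : f = g := by
  have hcoeff : (qExpansion 1 (f - g)).coeff 0 = 0 := by
    rw [ModularForm.qExpansion_sub one_pos one_mem_strictPeriods_SL, map_sub, hfg, sub_self]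
  have hcusp : toCuspForm (f - g) hcoeff = 0 :=
    rank_zero_iff_forall_zero.mp (CuspForm.rank_eq_zero_of_weight_lt_twelve hk) _
  exact sub_eq_zero.mp (DFunLike.ext _ _ fun z ↦ DFunLike.congr_fun hcusp z)

lemma tendsto_E2_atImInfty : Tendsto EisensteinSeries.E2 atImInfty (𝓝 1) := by
  have hsum (τ : ℍ) : HasSum (fun m : ℕ ↦
      (if m = 0 then 1 else -24 * σ 1 m : ℂ) • 𝕢 1 τ ^ m) (EisensteinSeries.E2 τ) := by
    simpa only [Periodic.qParam, Complex.ofReal_one, div_one] using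
      EisensteinSeries.hasSum_qExpansion_E2 (z := τ)
  simpa using tendsto_atImInfty_of_hasSum_qExpansion one_pos hsum

lemma tendsto_serreDerivative_atImInfty (f : ModularForm 𝒮ℒ k) :
    Tendsto (serreDerivative k f) atImInfty (𝓝 (-(k / 12) * (qExpansion 1 f).coeff 0)) := by
  have hD : Tendsto (D f) atImInfty (𝓝 0) :=
    isZeroAtImInfty_normalizedDerivOfComplex one_pos
      (SlashInvariantFormClass.periodic_comp_ofComplex f one_mem_strictPeriods_SL)
      (ModularFormClass.holo f) (ModularFormClass.bdd_at_infty f)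
  convert! hD.sub ((tendsto_E2_atImInfty.const_mul (k * 12⁻¹ : ℂ)).mul
    (tendsto_atImInfty_qExpansion_coeff_zero f)) using 2
  ring

lemma serreDerivative_slash_eq (f : ModularForm 𝒮ℒ k) (γ : SL(2, ℤ)) :
    serreDerivative k f ∣[k + 2] γ = serreDerivative k f :=
  serreDerivative_slash_invariant (ModularFormClass.holo f) (f.slash_action_eq' _ ⟨γ, rfl⟩)

/-- The Serre derivative `∂ₖ f = D f - (k / 12) E₂ f` of a level-one modular form `f` of weight `k`,
bundled as a modular form of weight `k + 2`. -/
noncomputable def serreDerivativeForm (f : ModularForm 𝒮ℒ k) : ModularForm 𝒮ℒ (k + 2) where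
  toFun := serreDerivative k f
  slash_action_eq' := by
    rintro _ ⟨γ, rfl⟩
    exact serreDerivative_slash_eq f γ
  holo' := serreDerivative_mdifferentiable k (ModularFormClass.holo f)
  bdd_at_cusps' hc := by
    rw [Subgroup.IsArithmetic.isCusp_iff_isCusp_SL2Z] at hc
    refine (OnePoint.isBoundedAt_iff_forall_SL2Z hc).mpr fun γ _ ↦ ?_
    rw [serreDerivative_slash_eq]
    exact (tendsto_serreDerivative_atImInfty f).isBigO_one ℝ

lemma qExpansion_serreDerivativeForm_coeff_zero (f : ModularForm 𝒮ℒ k) :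
    (qExpansion 1 (serreDerivativeForm f)).coeff 0 = -(k / 12) * (qExpansion 1 f).coeff 0 :=
  qExpansion_coeff_zero_eq_of_tendsto (tendsto_serreDerivative_atImInfty f)

end LevelOne

section Eisenstein

lemma serreDerivativeForm_E {k : ℕ} (hk : 3 ≤ k) (hk_even : Even k) (hk_lt : k < 10) :
    serreDerivativeForm (E hk) = -(k / 12 : ℂ) • E (k := k + 2) (by lia) := by
  refine eq_of_qExpansion_coeff_zero_eq_of_weight_lt_twelve (by lia) ?_
  have hE : (qExpansion 1 (E (k := k + 2) (by lia))).coeff 0 = 1 :=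
    EisensteinSeries.E_qExpansion_coeff_zero (by lia) (hk_even.add even_two)
  rw [qExpansion_serreDerivativeForm_coeff_zero, FunLike.coe_smul,
    EisensteinSeries.E_qExpansion_coeff_zero hk hk_even,
    ModularForm.qExpansion_smul one_pos one_mem_strictPeriods_SL, PowerSeries.coeff_smul, hE]
  simp

lemma normalizedDerivOfComplex_E₄ (τ : ℍ) :
    D E₄ τ = (EisensteinSeries.E2 τ * E₄ τ - E₆ τ) / 3 := by
  have h : D E₄ τ - 4 * 12⁻¹ * EisensteinSeries.E2 τ * E₄ τ = -(4 / 12) * E₆ τ :=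
    DFunLike.congr_fun (serreDerivativeForm_E (k := 4) (by norm_num) ⟨2, rfl⟩ (by norm_num)) τ
  linear_combination h

end Eisenstein

section Comparison

lemma tsum_sigmaC_mul_qexp_pow (k : ℕ) (z : ℂ) :
    ∑' n : ℕ, sigmaC k (n + 1) * qexp z ^ (n + 1) =
      ∑' n : ℕ+, (σ k n : ℂ) * Complex.exp (2 * Real.pi * Complex.I * z) ^ (n : ℕ) := by
  rw [tsum_pnat_eq_tsum_succ
    (f := fun n : ℕ ↦ (σ k n : ℂ) * Complex.exp (2 * Real.pi * Complex.I * z) ^ n)]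
  simp [sigmaC, qexp, ArithmeticFunction.sigma_apply]

lemma E_eq_tsum_sigmaC {k : ℕ} (hk : 3 ≤ k) (hk_even : Even k) (τ : ℍ) :
    E hk τ = 1 - 2 * k / bernoulli k * ∑' n : ℕ, sigmaC (k - 1) (n + 1) * qexp τ ^ (n + 1) := by
  simpa only [tsum_sigmaC_mul_qexp_pow, zpow_natCast] using
    EisensteinSeries.q_expansion_bernoulli hk hk_even τ

lemma E2_coe (τ : ℍ) : E2 τ = EisensteinSeries.E2 τ := by
  rw [E2, tsum_sigmaC_mul_qexp_pow, EisensteinSeries.E2_eq_tsum_cexp]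

lemma E4_coe (τ : ℍ) : E4 τ = E₄ τ := by
  have hB : bernoulli 4 = -1 / 30 := by decide +kernel
  rw [E4, E_eq_tsum_sigmaC _ ⟨2, rfl⟩, hB]
  norm_num

lemma E6_coe (τ : ℍ) : E6 τ = E₆ τ := by
  have hB : bernoulli 6 = 1 / 42 := by decide +kernel
  rw [E6, E_eq_tsum_sigmaC _ ⟨3, rfl⟩, hB]
  norm_num

lemma E4_eventuallyEq_comp_ofComplex (τ : ℍ) : E4 =ᶠ[𝓝 (τ : ℂ)] E₄ ∘ ofComplex := by
  filter_upwards [isOpen_upperHalfPlaneSet.mem_nhds τ.im_pos] with w hw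
  rw [Function.comp_apply, ofComplex_apply_of_im_pos hw, ← E4_coe]

end Comparison

/-- Ramanujan's identity `(1/(2πi)) E₄' = (E₂E₄ - E₆)/3`. -/
theorem ramanujan_E4 (τ : ℂ) (hτ : 0 < τ.im) :
    HasDerivAt E4 (2 * Real.pi * Complex.I * ((E2 τ * E4 τ - E6 τ) / 3)) τ := by
  lift τ to ℍ using hτ
  rw [E2_coe, E4_coe, E6_coe, ← normalizedDerivOfComplex_E₄]
  exact (hasDerivAt_comp_ofComplex (ModularFormClass.holo E₄ τ)).congr_of_eventuallyEq
    (E4_eventuallyEq_comp_ofComplex τ)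
end
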